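/- (The '▼' SDB polar transform of a DBEC.) Let p,q,r,s,t ≥ 0 with p+q+r+s+t = 1, let V := DBEC(p,q,r,s,t), and define V^▼((w₁,w₂) | (u₁,u₂)) := (1/4)·∑_{u₃,u₄ ∈ 𝔽₂} V(w₁ | (u₁+u₃, u₂+u₄))·V(w₂ | (u₃, u₄)) for w₁, w₂ ∈ (Option 𝔽₂)³. Define ψ : (Option 𝔽₂)³ × (Option 𝔽₂)³ → (Option 𝔽₂)³ componentwise by ψ((a₁,a₂,a₃),(b₁,b₂,b₃)) := (c₁,c₂,c₃), where for each j, c_j := some(x+y) if a_j = some x and b_j = some y, and c_j := none otherwise. Then for all u₁, u₂ ∈ 𝔽₂ and every w ∈ (Option 𝔽₂)³: ∑_{(w₁,w₂) : ψ(w₁,w₂) = w} V^▼((w₁,w₂) | (u₁,u₂)) = DBEC(p², q²+2pq, r²+2pr, s²+2ps, 2t−t²+2qr+2qs+2rs)(w | (u₁,u₂)). -/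

import Mathlib

/-!
A `DBEC` is a mixture of five deterministic channels (`DBEC_eq_sum_indicators`), so the combined
output `ψ(w₁, w₂)` of two copies is a mixture of 25 deterministic outcomes. The masking bits
`u₃, u₄` enter both copies and cancel in characteristic two wherever neither symbol is erased;
hence every outcome depends on `(u₁, u₂)` only, and the law of `ψ(w₁, w₂)` is the same for each
`(u₃, u₄)` (`sum_DBEC_mul_DBEC_psi`). Averaging over `(u₃, u₄)` therefore changes nothing. The
erasure patterns intersect: `p` acts as the identity, equal single-symbol patterns are idempotent,
and all other pairs erase everything.
-/

/-- Output alphabet of a double-bits-erasure-channel. -/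
abbrev OutTriple := Option (ZMod 2) × Option (ZMod 2) × Option (ZMod 2)

/-- The double-bits-erasure-channel `DBEC(p,q,r,s,t)`: on input `(u₁, u₂)` it outputs
`(some u₁, some (u₁+u₂), some u₂)` w.p. `p`, `(some u₁, none, none)` w.p. `q`,
`(none, some (u₁+u₂), none)` w.p. `r`, `(none, none, some u₂)` w.p. `s`, and
`(none, none, none)` w.p. `t`. -/
noncomputable def DBEC (p q r s t : ℝ) (u : ZMod 2 × ZMod 2) (w : OutTriple) : ℝ :=
  if w = (some u.1, some (u.1 + u.2), some u.2) then p
  else if w = (some u.1, none, none) then q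
  else if w = (none, some (u.1 + u.2), none) then r
  else if w = (none, none, some u.2) then s
  else if w = (none, none, none) then t
  else 0

/-- Add two unerased symbols; erase if either is erased. -/
def optAdd : Option (ZMod 2) → Option (ZMod 2) → Option (ZMod 2)
  | some x, some y => some (x + y)
  | _, _ => none

/-- The componentwise sufficient statistic for the '▼' transform. -/
def psiBlackNabla (w₁ w₂ : OutTriple) : OutTriple :=
  (optAdd w₁.1 w₂.1, optAdd w₁.2.1 w₂.2.1, optAdd w₁.2.2 w₂.2.2)

/-- The five possible outputs are pairwise distinct, so the nested conditionals of `DBEC`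
amount to a weighted sum of five point masses. -/
lemma DBEC_eq_sum_indicators (p q r s t : ℝ) (u : ZMod 2 × ZMod 2) (w : OutTriple) :
    DBEC p q r s t u w =
      (if (some u.1, some (u.1 + u.2), some u.2) = w then p else 0)
      + (if (some u.1, none, none) = w then q else 0)
      + (if (none, some (u.1 + u.2), none) = w then r else 0)
      + (if (none, none, some u.2) = w then s else 0)
      + (if (none, none, none) = w then t else 0) := by
  obtain ⟨a, b, c⟩ := w
  cases a <;> cases b <;> cases c <;> simp [DBEC, eq_comm]

lemma sum_DBEC_mul (p q r s t : ℝ) (u : ZMod 2 × ZMod 2) (f : OutTriple → ℝ) :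
    ∑ w : OutTriple, DBEC p q r s t u w * f w =
      p * f (some u.1, some (u.1 + u.2), some u.2) + q * f (some u.1, none, none)
      + r * f (none, some (u.1 + u.2), none) + s * f (none, none, some u.2)
      + t * f (none, none, none) := by
  simp only [DBEC_eq_sum_indicators, add_mul, Finset.sum_add_distrib, ite_mul, zero_mul,
    Finset.sum_ite_eq, Finset.mem_univ, if_true]

/-- For fixed inputs `(u₁ + u₃, u₂ + u₄)` and `(u₃, u₄)` of the two copies, the combined output
already has the claimed law, whatever the values of `u₃, u₄`; the law is tested against an
arbitrary function `f`. -/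
lemma sum_DBEC_mul_DBEC_psi (p q r s t : ℝ) (hsum : p + q + r + s + t = 1)
    (u₁ u₂ u₃ u₄ : ZMod 2) (f : OutTriple → ℝ) :
    ∑ w₁ : OutTriple, DBEC p q r s t (u₁ + u₃, u₂ + u₄) w₁ *
        ∑ w₂ : OutTriple, DBEC p q r s t (u₃, u₄) w₂ * f (psiBlackNabla w₁ w₂) =
      ∑ w : OutTriple,
        DBEC (p ^ 2) (q ^ 2 + 2 * p * q) (r ^ 2 + 2 * p * r) (s ^ 2 + 2 * p * s)
          (2 * t - t ^ 2 + 2 * q * r + 2 * q * s + 2 * r * s) (u₁, u₂) w * f w := by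
  have cancel : ∀ a b : ZMod 2, a + b + b = a := by decide
  have cancel_pair : ∀ a b c d : ZMod 2, a + b + (c + d) + (b + d) = a + c := by decide
  simp only [sum_DBEC_mul, psiBlackNabla, optAdd, cancel, cancel_pair]
  -- The fully erased output collects weight `t² + 2t(p+q+r+s) + 2qr + 2qs + 2rs`; total mass one
  -- turns its first two summands into `2t - t²`.
  linear_combination (2 * t * f (none, none, none)) * hsum

/-- The '▼' SDB polar transform of `DBEC(p,q,r,s,t)` is
`DBEC(p², q²+2pq, r²+2pr, s²+2ps, 2t−t²+2qr+2qs+2rs)`. -/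
theorem dbec_black_nabla_transform (p q r s t : ℝ)
    (hp : 0 ≤ p) (hq : 0 ≤ q) (hr : 0 ≤ r) (hs : 0 ≤ s) (ht : 0 ≤ t)
    (hsum : p + q + r + s + t = 1) (u₁ u₂ : ZMod 2) (w : OutTriple) :
    ∑ w₁ : OutTriple, ∑ w₂ : OutTriple,
        (if psiBlackNabla w₁ w₂ = w then
          (1 / 4 : ℝ) * ∑ u₃ : ZMod 2, ∑ u₄ : ZMod 2,
            DBEC p q r s t (u₁ + u₃, u₂ + u₄) w₁ * DBEC p q r s t (u₃, u₄) w₂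
        else 0) =
      DBEC (p ^ 2) (q ^ 2 + 2 * p * q) (r ^ 2 + 2 * p * r) (s ^ 2 + 2 * p * s)
        (2 * t - t ^ 2 + 2 * q * r + 2 * q * s + 2 * r * s) (u₁, u₂) w := by
  have rearrange : ∀ w₁ w₂ : OutTriple,
      (if psiBlackNabla w₁ w₂ = w then
          (1 / 4 : ℝ) * ∑ u₃ : ZMod 2, ∑ u₄ : ZMod 2,
            DBEC p q r s t (u₁ + u₃, u₂ + u₄) w₁ * DBEC p q r s t (u₃, u₄) w₂
        else 0) =
      ∑ u₃ : ZMod 2, ∑ u₄ : ZMod 2, (1 / 4 : ℝ) * (DBEC p q r s t (u₁ + u₃, u₂ + u₄) w₁ *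
        (DBEC p q r s t (u₃, u₄) w₂ * (if psiBlackNabla w₁ w₂ = w then 1 else 0))) := by
    intro w₁ w₂
    split_ifs <;> simp [Finset.mul_sum]
  simp only [rearrange]
  calc _ = ∑ u₃ : ZMod 2, ∑ u₄ : ZMod 2, (1 / 4 : ℝ) *
        ∑ w₁ : OutTriple, DBEC p q r s t (u₁ + u₃, u₂ + u₄) w₁ *
          ∑ w₂ : OutTriple, DBEC p q r s t (u₃, u₄) w₂ *
            (if psiBlackNabla w₁ w₂ = w then 1 else 0) := by
        simp only [Finset.mul_sum]
        simp_rw [Finset.sum_comm (s := (Finset.univ : Finset OutTriple))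
          (t := (Finset.univ : Finset (ZMod 2)))]
    _ = _ := by
        have law := fun u₃ u₄ : ZMod 2 => sum_DBEC_mul_DBEC_psi p q r s t hsum u₁ u₂ u₃ u₄
          (fun x => if x = w then 1 else 0)
        simp only [law]
        simp only [mul_ite, mul_one, mul_zero, Finset.sum_ite_eq', Finset.mem_univ, if_true,
          Finset.sum_const, Finset.card_univ, ZMod.card, nsmul_eq_mul]
        push_cast
        ring
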